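/- Let C be a digital curve with DSS predicate S, front map F and back map B as defined. A pair (i,j) with i ≤ j is a maximal segment iff S(i,j) ∧ ¬S(i,j+1) ∧ ¬S(i−1,j). Then for every i ≤ j with S(i,j), the pairs (B(j), F(B(j))) and (B(F(i)), F(i)) are maximal segments, and they both contain the segment [i,j]: B(j) ≤ i ≤ j ≤ F(B(j)) and B(F(i)) ≤ i ≤ j ≤ F(i). (Any DSS, and hence any point of the curve, belongs to at least two, possibly identical, maximal segments.) -/

import Mathlib

/-!
Every contiguous part of a digital straight segment is one (`IsDSS.mono`), since the same line
`D(a,b,μ)` serves. Hence a DSS starting before `B j` and ending at `F (B j) ≥ j` would restrict to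
one ending at `j`, against the minimality of `B j`; extension of `[B j, F (B j)]` past its front is
excluded by the definition of `F`. The pair `(B (F i), F i)` is symmetric.
-/

/-- `S i j`: the points `C i, …, C j` of the digital curve `C` form a digital straight
segment, i.e. they all lie in a common standard line `D(a,b,μ)`. -/
def IsDSS (C : ℤ → ℤ × ℤ) (i j : ℤ) : Prop :=
  ∃ a b μ : ℤ, ((a, b) : ℤ × ℤ) ≠ (0, 0) ∧
    ∀ k, i ≤ k → k ≤ j → μ ≤ a * (C k).1 - b * (C k).2 ∧
      a * (C k).1 - b * (C k).2 < μ + |a| + |b|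

/-- `(i,j)` is a maximal segment: it is a DSS extendable neither to the front nor to
the back. -/
def IsMaxSeg (C : ℤ → ℤ × ℤ) (i j : ℤ) : Prop :=
  i ≤ j ∧ IsDSS C i j ∧ ¬ IsDSS C i (j+1) ∧ ¬ IsDSS C (i-1) j

theorem IsDSS.mono {C : ℤ → ℤ × ℤ} {i j k l : ℤ} (h : IsDSS C i j) (hi : i ≤ k)
    (hj : l ≤ j) : IsDSS C k l := by
  obtain ⟨a, b, μ, hab, hk⟩ := h
  exact ⟨a, b, μ, hab, fun m h₁ h₂ => hk m (hi.trans h₁) (h₂.trans hj)⟩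

/-- Any DSS `[i,j]` (hence any point of the curve) is contained in the two (possibly
identical) maximal segments `(B j, F (B j))` and `(B (F i), F i)`. -/
theorem dss_contained_in_two_maximal_segments
    (C : ℤ → ℤ × ℤ)
    (hC : ∀ k : ℤ, |(C (k+1)).1 - (C k).1| + |(C (k+1)).2 - (C k).2| = 1)
    (hnoF : ∀ i : ℤ, ∃ j, i ≤ j ∧ ¬ IsDSS C i j)
    (hnoB : ∀ j : ℤ, ∃ i, i ≤ j ∧ ¬ IsDSS C i j)
    (F B : ℤ → ℤ)
    (hF : ∀ i : ℤ, i ≤ F i ∧ IsDSS C i (F i) ∧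
      ∀ j, i ≤ j → IsDSS C i j → j ≤ F i)
    (hB : ∀ j : ℤ, B j ≤ j ∧ IsDSS C (B j) j ∧
      ∀ i, i ≤ j → IsDSS C i j → B j ≤ i)
    (i j : ℤ) (hij : i ≤ j) (hS : IsDSS C i j) :
    IsMaxSeg C (B j) (F (B j)) ∧ IsMaxSeg C (B (F i)) (F i) ∧
    B j ≤ i ∧ j ≤ F (B j) ∧ B (F i) ≤ i ∧ j ≤ F i := by
  have hBi : B j ≤ i := (hB j).2.2 i hij hS
  have hjF : j ≤ F i := (hF i).2.2 j hij hS
  have hjFB : j ≤ F (B j) := (hF (B j)).2.2 j (hB j).1 (hB j).2.1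
  have hBFi : B (F i) ≤ i := (hB (F i)).2.2 i (hF i).1 (hF i).2.1
  refine ⟨⟨(hF _).1, (hF _).2.1, fun h => ?_, fun h => ?_⟩,
    ⟨(hB _).1, (hB _).2.1, fun h => ?_, fun h => ?_⟩, hBi, hjFB, hBFi, hjF⟩
  · have := (hF (B j)).2.2 _ (by linarith [(hF (B j)).1]) h
    omega
  · have := (hB j).2.2 _ (by linarith) (h.mono le_rfl hjFB)
    omega
  · have := (hF i).2.2 _ (by linarith) (h.mono hBFi le_rfl)
    omega
  · have := (hB (F i)).2.2 _ (by linarith [(hB (F i)).1]) h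
    omega
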